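/- Let Q be a hereditary graph class with Q̂ nonempty. Then sup_{W∈Q̂} Ent(W) = 0 if and only if Q is random-free, and sup_{W∈Q̂} Ent(W) = 1 if and only if Q_n is the set of all simple graphs on {1,…,n} for every n ≥ 1. -/

import Mathlib

open MeasureTheory Set Filter

noncomputable section

/-- A graphon: a symmetric measurable function `ℝ → ℝ → ℝ` with values in `[0,1]`
(only its values on `[0,1]²` matter). -/
def IsGraphon (W : ℝ → ℝ → ℝ) : Prop :=
  (∀ x y, W x y = W y x) ∧ Measurable (Function.uncurry W) ∧
    ∀ x y, W x y ∈ Set.Icc (0 : ℝ) 1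

/-- The cut norm `‖U‖_□`, the supremum over measurable `S, T ⊆ [0,1]` of
`|∫_{S×T} U|`. -/
def cutNorm (U : ℝ → ℝ → ℝ) : ℝ :=
  sSup { r : ℝ | ∃ S T : Set ℝ, MeasurableSet S ∧ MeasurableSet T ∧
    S ⊆ Set.Icc 0 1 ∧ T ⊆ Set.Icc 0 1 ∧
    r = |∫ p in S ×ˢ T, U p.1 p.2| }

/-- `d_□(W₁, W₂) = ‖W₁ - W₂‖_□`. -/
def dCut (W₁ W₂ : ℝ → ℝ → ℝ) : ℝ := cutNorm (fun x y => W₁ x y - W₂ x y)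

/-- A Lebesgue-measure-preserving map `[0,1] → [0,1]`. -/
def IsMPSelf (σ : ℝ → ℝ) : Prop :=
  MeasureTheory.MeasurePreserving σ
      (MeasureTheory.volume.restrict (Set.Icc (0:ℝ) 1))
      (MeasureTheory.volume.restrict (Set.Icc (0:ℝ) 1)) ∧
    Set.MapsTo σ (Set.Icc (0:ℝ) 1) (Set.Icc (0:ℝ) 1)

/-- The cut distance `δ_□(W₁, W₂)`. -/
def deltaCut (W₁ W₂ : ℝ → ℝ → ℝ) : ℝ :=
  sInf { r : ℝ | ∃ σ₁ σ₂ : ℝ → ℝ, IsMPSelf σ₁ ∧ IsMPSelf σ₂ ∧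
    r = cutNorm (fun x y => W₁ (σ₁ x) (σ₁ y) - W₂ (σ₂ x) (σ₂ y)) }

/-- The binary entropy function `h` (base-2 logarithm; `logb 2 0 = 0` by convention,
so `h 0 = h 1 = 0`). -/
def binEnt (x : ℝ) : ℝ := -x * Real.logb 2 x - (1 - x) * Real.logb 2 (1 - x)

/-- `h̃ x = h (min x (1/2))`. -/
def htilde (x : ℝ) : ℝ := binEnt (min x (1/2))

/-- The entropy `Ent(W) = ∫₀¹∫₀¹ h(W(x,y)) dx dy` of a graphon. -/
def graphonEnt (W : ℝ → ℝ → ℝ) : ℝ :=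
  ∫ x in Set.Icc (0:ℝ) 1, ∫ y in Set.Icc (0:ℝ) 1, binEnt (W x y)

open Classical in
/-- The graphon `W_G` of a simple graph `G` on `{1, …, n}` (vertices as `Fin n`,
vertex `i : Fin n` representing `i+1`): `W_G x y = 1` iff `⌈nx⌉⌈ny⌉ ∈ E(G)`. -/
def graphonOfGraph {n : ℕ} (G : SimpleGraph (Fin n)) : ℝ → ℝ → ℝ := fun x y =>
  if ∃ i j : Fin n, G.Adj i j ∧ ⌈(n : ℝ) * x⌉ = ((i : ℕ) : ℤ) + 1 ∧
      ⌈(n : ℝ) * y⌉ = ((j : ℕ) : ℤ) + 1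
  then 1 else 0

/-- A labelled graph class: a set of graphs on `{1,…,n}` for each `n`. -/
abbrev GraphClass := ∀ n : ℕ, Set (SimpleGraph (Fin n))

/-- A graph class is closed under relabelling by permutations. -/
def IsGraphClass (Q : GraphClass) : Prop :=
  ∀ (n : ℕ) (π : Equiv.Perm (Fin n)) (G : SimpleGraph (Fin n)),
    G ∈ Q n → G.comap ⇑π ∈ Q n

/-- A hereditary graph class: a graph class closed under taking induced subgraphs
(relabelled by the order-preserving bijection). -/
def IsHereditary (Q : GraphClass) : Prop :=
  IsGraphClass Q ∧
    ∀ (m n : ℕ) (f : Fin m → Fin n), StrictMono f →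
      ∀ G ∈ Q n, G.comap f ∈ Q m

/-- `Q̂`: the set of graphons which are limits (in cut distance) of sequences of graphs in
the class `Q` whose orders tend to infinity. -/
def limitSet (Q : GraphClass) : Set (ℝ → ℝ → ℝ) :=
  { W | IsGraphon W ∧
    ∃ (nk : ℕ → ℕ) (Gk : ∀ k, SimpleGraph (Fin (nk k))),
      (∀ k, Gk k ∈ Q (nk k)) ∧ Filter.Tendsto nk Filter.atTop Filter.atTop ∧
      Filter.Tendsto (fun k => deltaCut (graphonOfGraph (Gk k)) W) Filter.atTop (nhds 0) }

/-- `C(n,2) = n(n-1)/2` as a real number. -/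
def choose2 (n : ℕ) : ℝ := (n : ℝ) * ((n : ℝ) - 1) / 2

open Classical in
/-- The step function `E[W | P]` obtained by averaging `W` over the products of the
parts of the partition `P` of `[0,1]`. -/
def condExpPart {k : ℕ} (P : Fin k → Set ℝ) (W : ℝ → ℝ → ℝ) : ℝ → ℝ → ℝ := fun x y =>
  ∑ i : Fin k, ∑ j : Fin k,
    if x ∈ P i ∧ y ∈ P j then ⨍ p in (P i) ×ˢ (P j), W p.1 p.2 else 0

/-- `W̄_n`: the step function of `W` for the partition of `[0,1]` into `n` consecutive
intervals of length `1/n`. -/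
def barStep (n : ℕ) (W : ℝ → ℝ → ℝ) : ℝ → ℝ → ℝ :=
  condExpPart (fun i : Fin n => Set.Ioc (((i : ℕ) : ℝ)/n) ((((i : ℕ) : ℝ) + 1)/n)) W

/-- `N̂_□(n, δ; W)`: the number of graphs `G` on `{1,…,n}` with `d_□(W_G, W) ≤ δ`. -/
def NhatCut (n : ℕ) (δ : ℝ) (W : ℝ → ℝ → ℝ) : ℕ :=
  Nat.card {G : SimpleGraph (Fin n) // dCut (graphonOfGraph G) W ≤ δ}

/-- `N_□(n, δ; W)`: the number of graphs `G` on `{1,…,n}` with `δ_□(W_G, W) ≤ δ`. -/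
def NCut (n : ℕ) (δ : ℝ) (W : ℝ → ℝ → ℝ) : ℕ :=
  Nat.card {G : SimpleGraph (Fin n) // deltaCut (graphonOfGraph G) W ≤ δ}

open Classical in
/-- The induced density `p(F; W)` of a graph `F` on `{1,…,k}` in a graphon `W`. -/
def inducedDensity {k : ℕ} (F : SimpleGraph (Fin k)) (W : ℝ → ℝ → ℝ) : ℝ :=
  ∫ x : Fin k → ℝ in Set.univ.pi (fun _ : Fin k => Set.Icc (0:ℝ) 1),
    ∏ i : Fin k, ∏ j : Fin k,
      if i < j then (if F.Adj i j then W (x i) (x j) else 1 - W (x i) (x j)) else 1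

open Classical in
/-- The randomness support graphon `1_{rand(W)}` of `W`. -/
def randIndicator (W : ℝ → ℝ → ℝ) : ℝ → ℝ → ℝ := fun x y =>
  if 0 < W x y ∧ W x y < 1 then 1 else 0

/-- A kernel `U` is `K_r`-free if `∏_{i<j} U(x_i, x_j) = 0` for a.e. `x ∈ [0,1]^r`. -/
def KFree (r : ℕ) (U : ℝ → ℝ → ℝ) : Prop :=
  ∀ᵐ x ∂(MeasureTheory.volume.restrict (Set.univ.pi fun _ : Fin r => Set.Icc (0:ℝ) 1)),
    (∏ i : Fin r, ∏ j : Fin r, if i < j then U (x i) (x j) else 1) = 0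

open Classical in
/-- The graphon `W^{(r,s)}`: equal to `1/2` off the diagonal blocks, `1` on the first `s`
diagonal blocks `I_i × I_i`, and `0` on the remaining diagonal blocks. -/
def Wrs (r s : ℕ) : ℝ → ℝ → ℝ := fun x y =>
  if ∃ i j : Fin r, i ≠ j ∧ x ∈ Set.Ioc (((i:ℕ):ℝ)/r) ((((i:ℕ):ℝ)+1)/r) ∧
      y ∈ Set.Ioc (((j:ℕ):ℝ)/r) ((((j:ℕ):ℝ)+1)/r)
  then 1/2
  else if ∃ i : Fin r, (i:ℕ) < s ∧ x ∈ Set.Ioc (((i:ℕ):ℝ)/r) ((((i:ℕ):ℝ)+1)/r) ∧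
      y ∈ Set.Ioc (((i:ℕ):ℝ)/r) ((((i:ℕ):ℝ)+1)/r)
  then 1 else 0

/-- `E_r = ⋃_{i ≠ j} I_i × I_j` where `I_i`, `i = 1, …, r`, are the consecutive
intervals of length `1/r` in `[0,1]`. -/
def Er (r : ℕ) : Set (ℝ × ℝ) :=
  ⋃ (i : Fin r) (j : Fin r) (_ : i ≠ j),
    (Set.Ioc (((i:ℕ):ℝ)/r) ((((i:ℕ):ℝ)+1)/r)) ×ˢ (Set.Ioc (((j:ℕ):ℝ)/r) ((((j:ℕ):ℝ)+1)/r))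

/-- `R_r`: the set of graphons equal to `1/2` on `E_r` and `{0,1}`-valued elsewhere
on `[0,1]²`. -/
def Rset (r : ℕ) : Set (ℝ → ℝ → ℝ) :=
  { W | IsGraphon W ∧ (∀ p ∈ Er r, W p.1 p.2 = 1/2) ∧
      ∀ p ∈ ((Set.Icc (0:ℝ) 1) ×ˢ (Set.Icc (0:ℝ) 1)) \ Er r,
        W p.1 p.2 = 0 ∨ W p.1 p.2 = 1 }

/-- A graphon is random-free if it is `{0,1}`-valued a.e. on `[0,1]²`. -/
def IsRandomFree (W : ℝ → ℝ → ℝ) : Prop :=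
  ∀ᵐ p ∂(MeasureTheory.volume.restrict ((Set.Icc (0:ℝ) 1) ×ˢ (Set.Icc (0:ℝ) 1))),
    W (Prod.fst p) (Prod.snd p) = 0 ∨ W (Prod.fst p) (Prod.snd p) = 1


/-- Lebesgue measure on `[0,1]`. -/
abbrev muI : Measure ℝ := volume.restrict (Set.Icc (0:ℝ) 1)

instance muI_prob : IsProbabilityMeasure muI := ⟨by simp [muI]⟩

lemma binEnt_eq (x : ℝ) : binEnt x = Real.binEntropy x / Real.log 2 := by
  unfold binEnt Real.binEntropy Real.logb
  rw [Real.log_inv, Real.log_inv]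
  ring

lemma log_two_pos' : 0 < Real.log 2 := Real.log_pos (by norm_num)

lemma binEnt_measurable : Measurable binEnt := by
  have : binEnt = fun x => Real.binEntropy x / Real.log 2 := funext binEnt_eq
  rw [this]
  exact (Real.binEntropy_continuous.div_const _).measurable

lemma binEnt_nonneg {x : ℝ} (hx : x ∈ Set.Icc (0:ℝ) 1) : 0 ≤ binEnt x := by
  rw [binEnt_eq]
  exact div_nonneg (Real.binEntropy_nonneg hx.1 hx.2) log_two_pos'.le

lemma binEnt_le_one (x : ℝ) : binEnt x ≤ 1 := by
  rw [binEnt_eq, div_le_one log_two_pos']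
  exact Real.binEntropy_le_log_two

lemma binEnt_eq_zero (x : ℝ) : binEnt x = 0 ↔ x = 0 ∨ x = 1 := by
  rw [binEnt_eq, div_eq_zero_iff, Real.binEntropy_eq_zero]
  simp [log_two_pos'.ne']

lemma binEnt_half : binEnt (1/2) = 1 := by
  rw [binEnt_eq, one_div, Real.binEntropy_two_inv, div_self log_two_pos'.ne']

lemma binEnt_dev (δ : ℝ) (hδ : 0 < δ) :
    ∃ K : ℝ, 0 ≤ K ∧ ∀ x ∈ Set.Icc (0:ℝ) 1, |x - 1/2| ≤ δ + K * (1 - binEnt x) := by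
  have hc : IsCompact (Set.Icc (0:ℝ) 1 ∩ {x | δ ≤ |x - 1/2|}) := by
    apply isCompact_Icc.inter_right
    exact isClosed_le continuous_const (by fun_prop)
  rcases (Set.Icc (0:ℝ) 1 ∩ {x | δ ≤ |x - 1/2|}).eq_empty_or_nonempty with he | hn
  · refine ⟨0, le_rfl, fun x hx => ?_⟩
    by_contra hcon
    have : x ∈ (Set.Icc (0:ℝ) 1 ∩ {x | δ ≤ |x - 1/2|}) :=
      ⟨hx, by simp only [Set.mem_ofPred_eq]; linarith⟩
    rw [he] at this
    exact this
  · obtain ⟨z, hz, hmax⟩ := hc.exists_isMaxOn hn Real.binEntropy_continuous.continuousOn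
    have hz2 : z ≠ 2⁻¹ := by
      rintro rfl
      have := hz.2
      simp only [Set.mem_ofPred_eq] at this
      norm_num at this
      linarith
    have hlt : binEnt z < 1 := by
      rw [binEnt_eq, div_lt_one log_two_pos']
      exact Real.binEntropy_lt_log_two.2 hz2
    refine ⟨1 / (1 - binEnt z), by apply div_nonneg <;> linarith, fun x hx => ?_⟩
    have h1 : 0 ≤ 1 / (1 - binEnt z) * (1 - binEnt x) := by
      apply mul_nonneg
      · apply div_nonneg <;> linarith
      · linarith [binEnt_le_one x]
    by_cases hd : δ ≤ |x - 1/2|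
    · have h2 : binEnt x ≤ binEnt z := by
        rw [binEnt_eq, binEnt_eq]
        exact div_le_div_of_nonneg_right (hmax ⟨hx, hd⟩) log_two_pos'.le
      have h3 : 1 ≤ 1 / (1 - binEnt z) * (1 - binEnt x) := by
        rw [div_mul_eq_mul_div, one_mul, le_div_iff₀ (by linarith)]
        linarith
      have h4 : |x - 1/2| ≤ 1 := by
        rw [abs_le]; constructor <;> linarith [hx.1, hx.2]
      linarith
    · linarith

lemma integrable_bdd {α : Type*} [MeasurableSpace α] {μ : Measure α} [IsFiniteMeasure μ]
    {f : α → ℝ} (hf : Measurable f) (C : ℝ) (hC : ∀ x, |f x| ≤ C) : Integrable f μ :=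
  Integrable.of_bound hf.aestronglyMeasurable C (Filter.Eventually.of_forall hC)

lemma integrable_ent {W : ℝ → ℝ → ℝ} (hW : IsGraphon W) :
    Integrable (fun p : ℝ × ℝ => binEnt (W p.1 p.2)) (muI.prod muI) := by
  refine integrable_bdd (binEnt_measurable.comp hW.2.1) 1 fun p => ?_
  rw [abs_of_nonneg (binEnt_nonneg (hW.2.2 _ _))]
  exact binEnt_le_one _

lemma graphonEnt_eq {W : ℝ → ℝ → ℝ} (hW : IsGraphon W) :
    graphonEnt W = ∫ p, binEnt (W p.1 p.2) ∂(muI.prod muI) := by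
  rw [integral_prod _ (integrable_ent hW)]
  rfl

lemma graphonEnt_nonneg {W : ℝ → ℝ → ℝ} (hW : IsGraphon W) : 0 ≤ graphonEnt W := by
  rw [graphonEnt_eq hW]
  exact integral_nonneg fun p => binEnt_nonneg (hW.2.2 _ _)

lemma graphonEnt_le_one {W : ℝ → ℝ → ℝ} (hW : IsGraphon W) : graphonEnt W ≤ 1 := by
  rw [graphonEnt_eq hW]
  calc _ ≤ ∫ p : ℝ × ℝ, (1:ℝ) ∂(muI.prod muI) :=
        integral_mono (integrable_ent hW) (integrable_const _) fun p => binEnt_le_one _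
    _ = 1 := by simp

lemma graphonEnt_eq_zero_iff {W : ℝ → ℝ → ℝ} (hW : IsGraphon W) :
    graphonEnt W = 0 ↔ IsRandomFree W := by
  rw [graphonEnt_eq hW, integral_eq_zero_iff_of_nonneg (fun p => binEnt_nonneg (hW.2.2 _ _))
    (integrable_ent hW)]
  unfold IsRandomFree
  rw [Measure.volume_eq_prod, ← Measure.prod_restrict]
  constructor
  · intro h
    filter_upwards [h] with p hp
    exact (binEnt_eq_zero _).1 hp
  · intro h
    filter_upwards [h] with p hp
    exact (binEnt_eq_zero _).2 hp

lemma graphon_L1 (ε : ℝ) (hε : 0 < ε) : ∃ η : ℝ, 0 < η ∧ ∀ W, IsGraphon W →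
    1 - η < graphonEnt W → ∫ p, |W p.1 p.2 - 1/2| ∂(muI.prod muI) ≤ ε := by
  obtain ⟨K, hK, h⟩ := binEnt_dev (ε/2) (by linarith)
  refine ⟨ε / (2 * (K + 1)), by positivity, fun W hW hent => ?_⟩
  have h1 : ∫ p, |W p.1 p.2 - 1/2| ∂(muI.prod muI) ≤
      ∫ p, (ε/2 + K * (1 - binEnt (W p.1 p.2))) ∂(muI.prod muI) := by
    refine integral_mono_of_nonneg (Filter.Eventually.of_forall fun p => abs_nonneg _) ?_
      (Filter.Eventually.of_forall fun p => h _ (hW.2.2 _ _))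
    exact (integrable_const _).add (((integrable_const _).sub (integrable_ent hW)).const_mul K)
  have h0 : Integrable (fun p : ℝ × ℝ => K * (1 - binEnt (W p.1 p.2))) (muI.prod muI) :=
    ((integrable_const _).sub (integrable_ent hW)).const_mul K
  rw [integral_add (integrable_const _) h0, integral_const_mul,
    integral_sub (integrable_const _) (integrable_ent hW), ← graphonEnt_eq hW] at h1
  simp only [integral_const, probReal_univ, smul_eq_mul, one_mul] at h1
  have h2 : K * (1 - graphonEnt W) ≤ K * (ε / (2 * (K + 1))) :=
    mul_le_mul_of_nonneg_left (by linarith) hK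
  have h3 : K * (ε / (2 * (K + 1))) ≤ ε / 2 := by
    rw [mul_div_assoc', div_le_div_iff₀ (by positivity) (by norm_num)]
    nlinarith
  linarith

/-- The measure of the set of points with few neighbours in `T` is small. -/
lemma bad_bound {U : ℝ → ℝ → ℝ} (hU : Measurable (Function.uncurry U))
    (h01 : ∀ x y, U x y = 0 ∨ U x y = 1) {ε : ℝ}
    (hcut : ∀ S T : Set ℝ, MeasurableSet S → MeasurableSet T →
      |∫ p in S ×ˢ T, (U p.1 p.2 - 1/2) ∂(muI.prod muI)| ≤ ε)
    {c : ℝ} {T : Set ℝ} (hT : MeasurableSet T) (hc : c ≤ muI.real T) :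
    muI.real {x | muI.real (T ∩ {y | U x y = 1}) < c/4} * (c/4) ≤ ε := by
  set B : Set ℝ := {x | muI.real (T ∩ {y | U x y = 1}) < c/4} with hB
  have hE : MeasurableSet {p : ℝ × ℝ | p.2 ∈ T ∧ U p.1 p.2 = 1} :=
    (measurable_snd hT).inter (hU (measurableSet_singleton 1))
  have hBm : MeasurableSet B := by
    have h1 := measurable_measure_prodMk_left (ν := muI) hE
    have h2 : Measurable fun x => muI.real (T ∩ {y | U x y = 1}) := h1.ennreal_toReal
    exact measurableSet_lt h2 measurable_const
  have hx : ∀ x, MeasurableSet {y | U x y = 1} := fun x =>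
    (hU.comp measurable_prodMk_left) (measurableSet_singleton 1)
  have hbd : ∀ x y, |U x y - 1/2| ≤ 1 := by
    intro x y
    rcases h01 x y with h | h <;> rw [h] <;> rw [abs_le] <;> norm_num
  have hint : Integrable (fun p : ℝ × ℝ => U p.1 p.2 - 1/2) (muI.prod muI) :=
    integrable_bdd (hU.sub_const _) 1 fun p => hbd _ _
  have hin : ∀ x, ∫ y in T, (U x y - 1/2) ∂muI =
      muI.real (T ∩ {y | U x y = 1}) - muI.real T / 2 := by
    intro x
    have hmU : Measurable (U x) := hU.comp measurable_prodMk_left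
    have hiU : Integrable (U x) (muI.restrict T) :=
      integrable_bdd hmU 1 fun y => by rcases h01 x y with h | h <;> rw [h] <;> norm_num
    rw [integral_sub hiU (integrable_const _)]
    have : U x = Set.indicator {y | U x y = 1} (fun _ => (1:ℝ)) := by
      ext y
      by_cases h : U x y = 1
      · rw [Set.indicator_of_mem (by exact h), h]
      · rw [Set.indicator_of_notMem (by exact h)]
        exact (h01 x y).resolve_right h
    congr 1
    · conv_lhs => rw [this]
      rw [integral_indicator (hx x), Measure.restrict_restrict (hx x), Set.inter_comm]
      simp
    · simp [div_eq_mul_inv]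
  have hmain : ∫ p in B ×ˢ T, (U p.1 p.2 - 1/2) ∂(muI.prod muI) ≤ -(muI.real B * (c/4)) := by
    rw [setIntegral_prod _ hint.integrableOn]
    simp only [hin]
    have hmm : Measurable fun x => muI.real (T ∩ {y | U x y = 1}) :=
      (measurable_measure_prodMk_left (ν := muI) hE).ennreal_toReal
    calc _ ≤ ∫ x in B, (-(c/4)) ∂muI := by
          apply setIntegral_mono_on
          · refine (integrable_bdd (hmm.sub_const _) 2 fun x => ?_)
            have h1 : muI.real (T ∩ {y | U x y = 1}) ≤ 1 := measureReal_le_one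
            have h2 : muI.real T ≤ 1 := measureReal_le_one
            have h3 : 0 ≤ muI.real (T ∩ {y | U x y = 1}) := measureReal_nonneg
            have h4 : 0 ≤ muI.real T := measureReal_nonneg
            rw [abs_le]; constructor <;> linarith
          · exact integrable_const _
          · exact hBm
          · intro x hxB
            have : muI.real (T ∩ {y | U x y = 1}) < c/4 := hxB
            linarith
      _ = _ := by
        rw [setIntegral_const]; simp
  have := hcut B T hBm hT
  rw [abs_le] at this
  linarith

/-- Greedy embedding. -/
lemma embed (m : ℕ) : ∀ c : ℝ, 0 < c → ∃ ε : ℝ, 0 < ε ∧ ∀ U : ℝ → ℝ → ℝ,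
    Measurable (Function.uncurry U) → (∀ x y, U x y = 0 ∨ U x y = 1) →
    (∀ S T : Set ℝ, MeasurableSet S → MeasurableSet T →
      |∫ p in S ×ˢ T, (U p.1 p.2 - 1/2) ∂(muI.prod muI)| ≤ ε) →
    ∀ (P : Fin m → Fin m → Prop) (V : Fin m → Set ℝ), (∀ i, MeasurableSet (V i)) →
      (∀ i, c ≤ muI.real (V i)) →
      ∃ x : Fin m → ℝ, (∀ i, x i ∈ V i) ∧ ∀ i j, i < j → (U (x i) (x j) = 1 ↔ P i j) := by
  classical
  induction m with
  | zero =>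
    intro c hc
    exact ⟨1, one_pos, fun U _ _ _ P V _ _ => ⟨fun i => i.elim0, fun i => i.elim0,
      fun i => i.elim0⟩⟩
  | succ m ih =>
    intro c hc
    obtain ⟨ε', hε', H⟩ := ih (c/4) (by linarith)
    refine ⟨min ε' (c^2 / (8 * (m + 1))), by positivity, ?_⟩
    intro U hU h01 hcut P V hV hVc
    have hcut1 : ∀ S T : Set ℝ, MeasurableSet S → MeasurableSet T →
      |∫ p in S ×ˢ T, (U p.1 p.2 - 1/2) ∂(muI.prod muI)| ≤ c^2 / (8 * (m + 1)) :=
      fun S T hS hT => (hcut S T hS hT).trans (min_le_right _ _)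
    have hcut0 : ∀ S T : Set ℝ, MeasurableSet S → MeasurableSet T →
      |∫ p in S ×ˢ T, ((1 - U p.1 p.2) - 1/2) ∂(muI.prod muI)| ≤ c^2 / (8 * (m + 1)) := by
      intro S T hS hT
      have : (fun p : ℝ × ℝ => (1 - U p.1 p.2) - 1/2) = fun p => -(U p.1 p.2 - 1/2) := by
        ext p; ring
      rw [this, integral_neg, abs_neg]
      exact hcut1 S T hS hT
    -- candidate sets
    let A : ℝ → Fin m → Set ℝ := fun x i => V i.succ ∩ {y | U x y = 1 ↔ P 0 i.succ}
    have hbad : ∀ i : Fin m, muI.real {x | muI.real (A x i) < c/4} ≤ c / (2 * (m+1)) := by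
      intro i
      have key : muI.real {x | muI.real (A x i) < c/4} * (c/4) ≤ c^2 / (8 * (m + 1)) := by
        by_cases hP : P 0 i.succ
        · have := bad_bound hU h01 hcut1 (hV i.succ) (hVc i.succ)
          simpa only [A, hP, iff_true] using this
        · have := bad_bound (U := fun x y => 1 - U x y) (hU.const_sub 1)
            (fun x y => by rcases h01 x y with h | h <;> simp [h]) hcut0
            (hV i.succ) (hVc i.succ)
          have hset : ∀ x, {y | 1 - U x y = 1} = {y | U x y = 1 ↔ P 0 i.succ} := by
            intro x
            ext y
            rcases h01 x y with h | h <;> simp [h, hP]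
          simpa only [A, hset] using this
      have : c^2 / (8 * (m + 1)) = c / (2 * ((m:ℝ) + 1)) * (c / 4) := by
        field_simp
        norm_num
      rw [this] at key
      exact le_of_mul_le_mul_right key (by linarith)
    have hex : ∃ x ∈ V 0, ∀ i : Fin m, c/4 ≤ muI.real (A x i) := by
      by_contra hcon
      push Not at hcon
      have hsub : V 0 ⊆ ⋃ i : Fin m, {x | muI.real (A x i) < c/4} := by
        intro x hx
        obtain ⟨i, hi⟩ := hcon x hx
        exact Set.mem_iUnion.2 ⟨i, hi⟩
      have h1 : muI.real (V 0) ≤ ∑ i : Fin m, muI.real {x | muI.real (A x i) < c/4} :=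
        (measureReal_mono hsub).trans (measureReal_iUnion_fintype_le _)
      have h2 : ∑ i : Fin m, muI.real {x | muI.real (A x i) < c/4} ≤
          ∑ i : Fin m, c / (2 * ((m:ℝ)+1)) := Finset.sum_le_sum fun i _ => hbad i
      have h3 : ∑ i : Fin m, c / (2 * ((m:ℝ)+1)) < c := by
        simp only [Finset.sum_const, Finset.card_univ, Fintype.card_fin, nsmul_eq_mul]
        rw [mul_div_assoc', div_lt_iff₀ (by positivity)]
        nlinarith [(Nat.cast_nonneg m : (0:ℝ) ≤ m)]
      linarith [hVc 0]
    obtain ⟨x0, hx0, hA⟩ := hex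
    have hx : MeasurableSet {y | U x0 y = 1} :=
      (hU.comp measurable_prodMk_left) (measurableSet_singleton 1)
    have hAm : ∀ i, MeasurableSet (A x0 i) := by
      intro i
      refine (hV _).inter ?_
      by_cases hP : P 0 i.succ
      · simpa only [hP, iff_true] using hx
      · simp only [hP, iff_false]
        exact hx.compl
    obtain ⟨x, hxA, hxP⟩ := H U hU h01 (fun S T hS hT => (hcut S T hS hT).trans (min_le_left _ _))
      (fun i j => P i.succ j.succ) (A x0) hAm hA
    refine ⟨Fin.cons x0 x, ?_, ?_⟩
    · intro i
      refine Fin.cases ?_ (fun i => ?_) i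
      · simpa using hx0
      · simpa using (hxA i).1
    · intro i j
      refine Fin.cases ?_ (fun i => ?_) i <;> refine Fin.cases ?_ (fun j => ?_) j
      · intro h; exact absurd h (lt_irrefl _)
      · intro _; simpa using (hxA j).2
      · intro h; exact absurd h (Fin.not_lt_zero _)
      · intro h; simpa using hxP i j (Fin.succ_lt_succ_iff.1 h)

lemma setIntegral_muI (f : ℝ × ℝ → ℝ) {S T : Set ℝ} (hS : MeasurableSet S)
    (hT : MeasurableSet T) :
    ∫ p in S ×ˢ T, f p ∂(muI.prod muI) =
      ∫ p in (S ∩ Set.Icc 0 1) ×ˢ (T ∩ Set.Icc 0 1), f p := by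
  rw [← Measure.prod_restrict, Measure.restrict_restrict hS, Measure.restrict_restrict hT,
    Measure.prod_restrict, Measure.volume_eq_prod]

lemma unit_square_sub {S T : Set ℝ} (hS : S ⊆ Set.Icc 0 1) (hT : T ⊆ Set.Icc 0 1) :
    (volume : Measure (ℝ × ℝ)) (S ×ˢ T) ≤ 1 := by
  calc (volume : Measure (ℝ × ℝ)) (S ×ˢ T) ≤ volume (Set.Icc (0:ℝ) 1 ×ˢ Set.Icc (0:ℝ) 1) :=
        measure_mono (Set.prod_mono hS hT)
    _ = 1 := by rw [Measure.volume_eq_prod, Measure.prod_prod]; simp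

lemma le_cutNorm {U : ℝ → ℝ → ℝ} (hbd : ∀ x y, |U x y| ≤ 1) {S T : Set ℝ}
    (hS : MeasurableSet S) (hT : MeasurableSet T) (hS1 : S ⊆ Set.Icc 0 1)
    (hT1 : T ⊆ Set.Icc 0 1) : |∫ p in S ×ˢ T, U p.1 p.2| ≤ cutNorm U := by
  refine le_csSup ⟨1, ?_⟩ ⟨S, T, hS, hT, hS1, hT1, rfl⟩
  rintro r ⟨S, T, hS, hT, hS1, hT1, rfl⟩
  have h1 := unit_square_sub hS1 hT1
  have h2 : ‖∫ p in S ×ˢ T, U p.1 p.2‖ ≤ 1 * (volume : Measure (ℝ × ℝ)).real (S ×ˢ T) :=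
    norm_setIntegral_le_of_norm_le_const (lt_of_le_of_lt h1 ENNReal.one_lt_top)
      (fun p _ => hbd _ _)
  rw [Real.norm_eq_abs, one_mul] at h2
  refine h2.trans ?_
  have := ENNReal.toReal_mono ENNReal.one_ne_top h1
  rw [ENNReal.toReal_one] at this
  exact this

lemma cutNorm_nonneg (U : ℝ → ℝ → ℝ) : 0 ≤ cutNorm U := by
  apply Real.sSup_nonneg
  rintro r ⟨S, T, hS, hT, hS1, hT1, rfl⟩
  exact abs_nonneg _

lemma isMPSelf_id : IsMPSelf id := ⟨MeasurePreserving.id _, fun _ h => h⟩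

lemma graphonOfGraph_zero_or_one {n : ℕ} (G : SimpleGraph (Fin n)) (x y : ℝ) :
    graphonOfGraph G x y = 0 ∨ graphonOfGraph G x y = 1 := by
  unfold graphonOfGraph
  split_ifs <;> simp

lemma graphonOfGraph_measurable {n : ℕ} (G : SimpleGraph (Fin n)) :
    Measurable (Function.uncurry (graphonOfGraph G)) := by
  classical
  let g : ℤ × ℤ → ℝ := fun q => if ∃ i j : Fin n, G.Adj i j ∧ q.1 = ((i : ℕ) : ℤ) + 1 ∧
      q.2 = ((j : ℕ) : ℤ) + 1 then 1 else 0
  have hg : Measurable g := Measurable.of_discrete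
  have hm : Measurable fun p : ℝ × ℝ => (⌈(n:ℝ) * p.1⌉, ⌈(n:ℝ) * p.2⌉) :=
    ((measurable_fst.const_mul _).ceil).prodMk ((measurable_snd.const_mul _).ceil)
  have : Function.uncurry (graphonOfGraph G) =
      g ∘ fun p : ℝ × ℝ => (⌈(n:ℝ) * p.1⌉, ⌈(n:ℝ) * p.2⌉) := by
    ext p
    simp only [Function.uncurry, graphonOfGraph, Function.comp, g]
  rw [this]
  exact hg.comp hm

lemma graphonOfGraph_eq_one {n : ℕ} (G : SimpleGraph (Fin n)) {x y : ℝ} {i j : Fin n}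
    (hx : ⌈(n : ℝ) * x⌉ = ((i : ℕ) : ℤ) + 1) (hy : ⌈(n : ℝ) * y⌉ = ((j : ℕ) : ℤ) + 1) :
    graphonOfGraph G x y = 1 ↔ G.Adj i j := by
  unfold graphonOfGraph
  constructor
  · intro h
    split_ifs at h with h'
    · obtain ⟨i', j', hadj, hi, hj⟩ := h'
      have e1 : i' = i := Fin.ext (by omega)
      have e2 : j' = j := Fin.ext (by omega)
      rwa [← e1, ← e2]
    · norm_num at h
  · intro h
    rw [if_pos ⟨i, j, h, hx, hy⟩]

lemma exists_index {N : ℕ} {y : ℝ} (hy0 : 0 < y) (hy1 : y ≤ 1) (hN : 0 < N) :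
    ∃ k : Fin N, ⌈(N : ℝ) * y⌉ = ((k : ℕ) : ℤ) + 1 := by
  have hN' : (0:ℝ) < N := by exact_mod_cast hN
  have h1 : 0 < ⌈(N : ℝ) * y⌉ := Int.ceil_pos.2 (by positivity)
  have h2 : ⌈(N : ℝ) * y⌉ ≤ N := by
    rw [Int.ceil_le]
    push_cast
    nlinarith
  refine ⟨⟨(⌈(N : ℝ) * y⌉ - 1).toNat, by omega⟩, ?_⟩
  simp only
  omega

lemma forward_dir (Q : GraphClass) (hQ : IsHereditary Q) (hne : (limitSet Q).Nonempty)
    (hsup : sSup (graphonEnt '' limitSet Q) = 1) (n : ℕ) (hn : 1 ≤ n) :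
    Q n = (Set.univ : Set (SimpleGraph (Fin n))) := by
  have hn' : (0:ℝ) < n := by exact_mod_cast hn
  ext F
  simp only [Set.mem_univ, iff_true]
  obtain ⟨ε, hε, hemb⟩ := embed n (1 / (2 * n)) (by positivity)
  obtain ⟨η, hη, hL1⟩ := graphon_L1 (ε/2) (by linarith)
  obtain ⟨_, ⟨W, hWQ, rfl⟩, hWent⟩ := exists_lt_of_lt_csSup (hne.image graphonEnt)
    (show 1 - η < sSup (graphonEnt '' limitSet Q) by linarith)
  obtain ⟨hW, nk, Gk, hGQ, hnk, hlim⟩ := hWQ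
  have hdev := hL1 W hW hWent
  obtain ⟨N, G, hGk, hk1, hk2⟩ : ∃ (N : ℕ) (G : SimpleGraph (Fin N)), G ∈ Q N ∧
      deltaCut (graphonOfGraph G) W < ε/2 ∧ 2 * n ≤ N := by
    obtain ⟨k, hk1, hk2⟩ := ((hlim.eventually_lt_const (show (0:ℝ) < ε/2 by linarith)).and
      (hnk.eventually_ge_atTop (2 * n))).exists
    exact ⟨nk k, Gk k, hGQ k, hk1, hk2⟩
  obtain ⟨_, ⟨σ₁, σ₂, hσ₁, hσ₂, rfl⟩, hcn⟩ := exists_lt_of_csInf_lt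
    (by exact ⟨_, id, id, isMPSelf_id, isMPSelf_id, rfl⟩) hk1
  let U : ℝ → ℝ → ℝ := fun x y => graphonOfGraph G (σ₁ x) (σ₁ y)
  have hmp : Measurable fun p : ℝ × ℝ => (σ₁ p.1, σ₁ p.2) :=
    (hσ₁.1.measurable.comp measurable_fst).prodMk (hσ₁.1.measurable.comp measurable_snd)
  have hmp2 : MeasurePreserving (Prod.map σ₂ σ₂) (muI.prod muI) (muI.prod muI) :=
    hσ₂.1.prod hσ₂.1
  have hUm : Measurable (Function.uncurry U) := (graphonOfGraph_measurable G).comp hmp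
  have hU01 : ∀ x y, U x y = 0 ∨ U x y = 1 := fun x y => graphonOfGraph_zero_or_one G _ _
  have hWm2 : Measurable fun p : ℝ × ℝ => W (σ₂ p.1) (σ₂ p.2) :=
    hW.2.1.comp hmp2.measurable
  have hWb := hW.2.2
  have hcut : ∀ S T : Set ℝ, MeasurableSet S → MeasurableSet T →
      |∫ p in S ×ˢ T, (U p.1 p.2 - 1/2) ∂(muI.prod muI)| ≤ ε := by
    intro S T hS hT
    have e1 : Integrable (fun p : ℝ × ℝ => U p.1 p.2 - W (σ₂ p.1) (σ₂ p.2)) (muI.prod muI) :=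
      integrable_bdd (hUm.sub hWm2) 1 fun p => by
        have := hWb (σ₂ p.1) (σ₂ p.2)
        rw [abs_le]
        rcases hU01 p.1 p.2 with h | h <;> rw [h] <;> constructor <;> linarith [this.1, this.2]
    have e2 : Integrable (fun p : ℝ × ℝ => W (σ₂ p.1) (σ₂ p.2) - 1/2) (muI.prod muI) :=
      integrable_bdd (hWm2.sub_const _) 1 fun p => by
        have := hWb (σ₂ p.1) (σ₂ p.2)
        rw [abs_le]
        constructor <;> linarith [this.1, this.2]
    have hsplit : ∫ p in S ×ˢ T, (U p.1 p.2 - 1/2) ∂(muI.prod muI) =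
        ∫ p in S ×ˢ T, (U p.1 p.2 - W (σ₂ p.1) (σ₂ p.2)) ∂(muI.prod muI) +
        ∫ p in S ×ˢ T, (W (σ₂ p.1) (σ₂ p.2) - 1/2) ∂(muI.prod muI) := by
      rw [← integral_add e1.integrableOn e2.integrableOn]
      congr 1
      ext p
      ring
    rw [hsplit]
    refine (abs_add_le _ _).trans ?_
    have b1 : |∫ p in S ×ˢ T, (U p.1 p.2 - W (σ₂ p.1) (σ₂ p.2)) ∂(muI.prod muI)| ≤ ε/2 := by
      rw [setIntegral_muI _ hS hT]
      refine (le_cutNorm (U := fun x y => U x y - W (σ₂ x) (σ₂ y)) (fun x y => ?_)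
        (hS.inter measurableSet_Icc) (hT.inter measurableSet_Icc) Set.inter_subset_right
        Set.inter_subset_right).trans hcn.le
      have := hWb (σ₂ x) (σ₂ y)
      rw [abs_le]
      rcases hU01 x y with h | h <;> rw [h] <;> constructor <;> linarith [this.1, this.2]
    have b2 : |∫ p in S ×ˢ T, (W (σ₂ p.1) (σ₂ p.2) - 1/2) ∂(muI.prod muI)| ≤ ε/2 := by
      refine (abs_integral_le_integral_abs).trans ?_
      refine (setIntegral_le_integral e2.abs
        (Filter.Eventually.of_forall fun p => abs_nonneg _)).trans ?_
      have hf : AEStronglyMeasurable (fun p : ℝ × ℝ => |W p.1 p.2 - 1/2|)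
          (Measure.map (Prod.map σ₂ σ₂) (muI.prod muI)) :=
        (measurable_abs.comp (hW.2.1.sub_const _)).aestronglyMeasurable
      have := integral_map hmp2.measurable.aemeasurable hf
      rw [hmp2.map_eq] at this
      rw [this] at hdev
      exact hdev
    linarith
  let V : Fin n → Set ℝ := fun i =>
    σ₁ ⁻¹' Set.Icc ((2 * (i:ℕ) + 1) / (2 * n) : ℝ) ((2 * (i:ℕ) + 2) / (2 * n) : ℝ)
  have hin : ∀ i : Fin n, ((i:ℕ):ℝ) + 1 ≤ n := fun i => by exact_mod_cast i.2
  have hV1 : ∀ i : Fin n, ((2 * (i:ℕ) + 2) / (2 * n) : ℝ) ≤ 1 := fun i => by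
    rw [div_le_one (by positivity)]
    linarith [hin i]
  have hV0 : ∀ i : Fin n, 0 < ((2 * (i:ℕ) + 1) / (2 * n) : ℝ) := fun i => by positivity
  have hVm : ∀ i, MeasurableSet (V i) := fun i => hσ₁.1.measurable measurableSet_Icc
  have hVc : ∀ i, 1 / (2 * n) ≤ muI.real (V i) := by
    intro i
    have h1 : muI (V i) = muI (Set.Icc ((2 * (i:ℕ) + 1) / (2 * n) : ℝ)
        ((2 * (i:ℕ) + 2) / (2 * n) : ℝ)) :=
      hσ₁.1.measure_preimage measurableSet_Icc.nullMeasurableSet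
    rw [measureReal_def, h1, Measure.restrict_apply measurableSet_Icc,
      Set.inter_eq_left.2 (Set.Icc_subset_Icc (hV0 i).le (hV1 i)), Real.volume_Icc,
      ENNReal.toReal_ofReal]
    · apply le_of_eq
      field_simp
      ring
    · rw [← sub_div]
      apply div_nonneg <;> linarith
  obtain ⟨x, hxV, hxU⟩ := hemb U hUm hU01 hcut F.Adj V hVm hVc
  have hNpos : 0 < N := by omega
  have hidx : ∀ i, ∃ k : Fin N, ⌈(N : ℝ) * σ₁ (x i)⌉ = ((k : ℕ) : ℤ) + 1 := fun i =>
    exists_index ((hV0 i).trans_le (hxV i).1) ((hxV i).2.trans (hV1 i)) hNpos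
  choose f hf using hidx
  have hmono : StrictMono f := by
    intro i j hij
    have h1 := (hxV i).2
    have h2 := (hxV j).1
    have hij' : ((i:ℕ):ℝ) + 1 ≤ (j:ℕ) := by exact_mod_cast hij
    have hNn : (2 * n : ℝ) ≤ N := by exact_mod_cast hk2
    have h3 : σ₁ (x i) + 1 / (2 * n) ≤ σ₁ (x j) := by
      have : ((2 * (i:ℕ) + 2) / (2 * n) : ℝ) + 1 / (2 * n) ≤ (2 * (j:ℕ) + 1) / (2 * n) := by
        rw [← add_div]
        apply div_le_div_of_nonneg_right _ (by positivity)
        linarith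
      linarith
    have h4 : (N:ℝ) * σ₁ (x i) + 1 ≤ N * σ₁ (x j) := by
      have h5 : (1:ℝ) ≤ N * (1 / (2 * n)) := by
        rw [mul_one_div, le_div_iff₀ (by positivity)]
        linarith
      have h6 := mul_le_mul_of_nonneg_left h3 (Nat.cast_nonneg N : (0:ℝ) ≤ N)
      linarith
    have h7 := Int.ceil_mono h4
    rw [Int.ceil_add_one, hf, hf] at h7
    rw [Fin.lt_def]
    omega
  have hFG : F = G.comap f := by
    have key : ∀ i j, i < j → (F.Adj i j ↔ G.Adj (f i) (f j)) := fun i j hij =>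
      (hxU i j hij).symm.trans (graphonOfGraph_eq_one G (hf i) (hf j))
    ext i j
    rw [SimpleGraph.comap_adj]
    rcases lt_trichotomy i j with h | h | h
    · exact key i j h
    · subst h; simp
    · rw [F.adj_comm, G.adj_comm]; exact key j i h
  rw [hFG]
  exact hQ.2 n N f hmono G hGk

/-- sign function for the Sylvester-Hadamard matrix -/
def hsgn (a b : Bool) : ℝ := if a && b then -1 else 1

/-- Sylvester-Hadamard matrix. -/
def hadM {k : ℕ} (x y : Fin k → Bool) : ℝ := ∏ i, hsgn (x i) (y i)

lemma hadM_symm {k : ℕ} (x y : Fin k → Bool) : hadM x y = hadM y x := by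
  unfold hadM hsgn
  simp only [Bool.and_comm]

lemma hadM_pm {k : ℕ} (x y : Fin k → Bool) : hadM x y = 1 ∨ hadM x y = -1 := by
  unfold hadM
  refine Finset.prod_induction _ (fun r : ℝ => r = 1 ∨ r = -1) ?_ (Or.inl rfl) ?_
  · rintro a b (rfl | rfl) (rfl | rfl) <;> norm_num
  · intro i _
    unfold hsgn
    split_ifs <;> simp

lemma hadM_orth {k : ℕ} (x y : Fin k → Bool) :
    ∑ z, hadM z x * hadM z y = if x = y then (2:ℝ)^k else 0 := by
  unfold hadM
  simp only [← Finset.prod_mul_distrib]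
  have h := Finset.prod_univ_sum (fun _ : Fin k => (Finset.univ : Finset Bool))
    (fun i b => hsgn b (x i) * hsgn b (y i))
  rw [Fintype.piFinset_univ] at h
  rw [← h]
  have h2 : ∀ i, ∑ b, hsgn b (x i) * hsgn b (y i) = if x i = y i then (2:ℝ) else 0 := by
    intro i
    cases x i <;> cases y i <;> simp [hsgn] <;> norm_num
  simp only [h2]
  split_ifs with hxy
  · subst hxy; simp
  · obtain ⟨i, hi⟩ := Function.ne_iff.1 hxy
    exact Finset.prod_eq_zero (Finset.mem_univ i) (by simp [hi])

/-- Lindsey's lemma. -/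
lemma hadM_bilin {k : ℕ} (s t : (Fin k → Bool) → ℝ) :
    (∑ x, ∑ y, hadM x y * s x * t y)^2 ≤ (∑ x, s x ^ 2) * (2^k * ∑ y, t y ^ 2) := by
  have h1 : ∑ x, ∑ y, hadM x y * s x * t y = ∑ x, s x * ∑ y, hadM x y * t y := by
    refine Finset.sum_congr rfl fun x _ => ?_
    rw [Finset.mul_sum]
    refine Finset.sum_congr rfl fun y _ => ?_
    ring
  rw [h1]
  refine (Finset.sum_mul_sq_le_sq_mul_sq _ _ _).trans (le_of_eq ?_)
  congr 1
  calc ∑ x, (∑ y, hadM x y * t y)^2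
      = ∑ x, ∑ y, ∑ z, (hadM x y * hadM x z) * (t y * t z) := by
        refine Finset.sum_congr rfl fun x _ => ?_
        rw [sq, Finset.sum_mul_sum]
        refine Finset.sum_congr rfl fun y _ => Finset.sum_congr rfl fun z _ => ?_
        ring
    _ = ∑ y, ∑ z, (∑ x, hadM x y * hadM x z) * (t y * t z) := by
        rw [Finset.sum_comm]
        refine Finset.sum_congr rfl fun y _ => ?_
        rw [Finset.sum_comm]
        refine Finset.sum_congr rfl fun z _ => ?_
        rw [Finset.sum_mul]
    _ = 2^k * ∑ y, t y ^ 2 := by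
        simp only [hadM_orth, ite_mul, zero_mul, Finset.sum_ite_eq, Finset.mem_univ, if_true]
        rw [Finset.mul_sum]
        refine Finset.sum_congr rfl fun y _ => ?_
        ring

/-- Relabelling. -/
def hadE (k : ℕ) : Fin (2^k) ≃ (Fin k → Bool) :=
  Fintype.equivOfCardEq (by simp)

/-- Hadamard graph. -/
def hadG (k : ℕ) : SimpleGraph (Fin (2^k)) where
  Adj i j := i ≠ j ∧ hadM (hadE k i) (hadE k j) = 1
  symm := ⟨fun i j h => ⟨h.1.symm, by rw [hadM_symm]; exact h.2⟩⟩
  loopless := ⟨fun i h => h.1 rfl⟩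

/-- cells -/
def cell (N : ℕ) (i : Fin N) : Set ℝ := {x | ⌈(N : ℝ) * x⌉ = ((i : ℕ) : ℤ) + 1}

lemma cell_eq {N : ℕ} (i : Fin N) :
    cell N i = Set.Ioc (((i:ℕ):ℝ) / N) ((((i:ℕ):ℝ) + 1) / N) := by
  have hN : (0:ℝ) < N := by exact_mod_cast (Nat.zero_lt_of_lt i.2)
  ext x
  simp only [cell, Set.mem_ofPred_eq, Set.mem_Ioc]
  rw [Int.ceil_eq_iff, div_lt_iff₀ hN, le_div_iff₀ hN]
  push_cast
  constructor
  · rintro ⟨h1, h2⟩; constructor <;> linarith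
  · rintro ⟨h1, h2⟩; constructor <;> linarith

lemma cell_measurable {N : ℕ} (i : Fin N) : MeasurableSet (cell N i) := by
  rw [cell_eq]; exact measurableSet_Ioc

lemma cell_inter_le {N : ℕ} (i : Fin N) (S : Set ℝ) :
    volume.real (S ∩ cell N i) ≤ 1 / N := by
  have hN : (0:ℝ) < N := by exact_mod_cast (Nat.zero_lt_of_lt i.2)
  have h1 : volume.real (cell N i) = 1 / N := by
    rw [cell_eq, Real.volume_real_Ioc_of_le]
    · ring
    · apply div_le_div_of_nonneg_right _ hN.le; linarith
  rw [← h1]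
  refine measureReal_mono Set.inter_subset_right ?_
  rw [cell_eq]
  simp

/-- entry of the centred matrix -/
lemma had_pointwise (k : ℕ) {x y : ℝ} (hx0 : 0 < x) (hx1 : x ≤ 1) (hy0 : 0 < y) (hy1 : y ≤ 1) :
    graphonOfGraph (hadG k) x y - 1/2 = ∑ i : Fin (2^k), ∑ j : Fin (2^k),
      (hadM (hadE k i) (hadE k j) / 2 - (if i = j then (hadM (hadE k i) (hadE k j) + 1) / 2 else 0))
        * ((cell (2^k) i).indicator (fun _ => (1:ℝ)) x * (cell (2^k) j).indicator (fun _ => (1:ℝ)) y) := by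
  classical
  obtain ⟨a, ha⟩ := exists_index (N := 2^k) hx0 hx1 (by positivity)
  obtain ⟨b, hb⟩ := exists_index (N := 2^k) hy0 hy1 (by positivity)
  have ind : ∀ (z : ℝ) (a i : Fin (2^k)), ⌈((2^k : ℕ) : ℝ) * z⌉ = ((a : ℕ) : ℤ) + 1 →
      (cell (2^k) i).indicator (fun _ => (1:ℝ)) z = if i = a then 1 else 0 := by
    intro z a i h
    by_cases hia : i = a
    · subst hia
      rw [if_pos rfl, Set.indicator_of_mem (by exact h)]
    · rw [if_neg hia, Set.indicator_of_notMem]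
      intro h'
      have h'' : ⌈((2^k : ℕ) : ℝ) * z⌉ = ((i : ℕ) : ℤ) + 1 := h'
      exact hia (Fin.ext (by omega))
  simp only [ind x a _ ha, ind y b _ hb]
  rw [Finset.sum_eq_single a (by intro i _ h; simp [h]) (by simp),
    Finset.sum_eq_single b (by intro i _ h; simp [h]) (by simp)]
  have h1 := graphonOfGraph_eq_one (hadG k) ha hb
  have h2 := graphonOfGraph_zero_or_one (hadG k) x y
  have h3 := hadM_pm (hadE k a) (hadE k b)
  have hadj : (hadG k).Adj a b ↔ a ≠ b ∧ hadM (hadE k a) (hadE k b) = 1 := Iff.rfl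
  rw [hadj] at h1
  simp only [if_true, mul_one]
  by_cases hab : a = b
  · have : graphonOfGraph (hadG k) x y = 0 := h2.resolve_right fun h => (h1.1 h).1 hab
    rw [this, if_pos hab]
    ring
  · rw [if_neg hab]
    rcases h3 with h | h
    · rw [h1.2 ⟨hab, h⟩, h]; norm_num
    · have : graphonOfGraph (hadG k) x y = 0 := h2.resolve_right fun h' => by
        have := (h1.1 h').2
        rw [h] at this
        norm_num at this
      rw [this, h]; norm_num

lemma had_integral (k : ℕ) {S T : Set ℝ} (hS : MeasurableSet S) (hT : MeasurableSet T)
    (hS1 : S ⊆ Set.Icc 0 1) (hT1 : T ⊆ Set.Icc 0 1) :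
    ∫ p in S ×ˢ T, (graphonOfGraph (hadG k) p.1 p.2 - 1/2) = 
      ∑ i : Fin (2^k), ∑ j : Fin (2^k),
      (hadM (hadE k i) (hadE k j) / 2 - (if i = j then (hadM (hadE k i) (hadE k j) + 1) / 2 else 0))
        * (volume.real (S ∩ cell (2^k) i) * volume.real (T ∩ cell (2^k) j)) := by
  have hSf : volume S ≠ ⊤ := ((measure_mono hS1).trans_lt (by simp)).ne
  have hTf : volume T ≠ ⊤ := ((measure_mono hT1).trans_lt (by simp)).ne
  have : IsFiniteMeasure (volume.restrict S) := ⟨by simpa using hSf.lt_top⟩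
  have : IsFiniteMeasure (volume.restrict T) := ⟨by simpa using hTf.lt_top⟩
  have hae : ∀ S : Set ℝ, MeasurableSet S → S ⊆ Set.Icc 0 1 →
      ∀ᵐ x ∂(volume.restrict S), 0 < x ∧ x ≤ 1 := by
    intro S hS hS1
    rw [ae_restrict_iff' hS]
    have : ∀ᵐ x : ℝ, x ≠ 0 := by
      rw [ae_iff]; simp
    filter_upwards [this] with x hx hxS
    exact ⟨lt_of_le_of_ne (hS1 hxS).1 (Ne.symm hx), (hS1 hxS).2⟩
  rw [Measure.volume_eq_prod, ← Measure.prod_restrict]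
  have hi : ∀ (S : Set ℝ) [IsFiniteMeasure (volume.restrict S)] (i : Fin (2^k)), Integrable
      ((cell (2^k) i).indicator (fun _ => (1:ℝ))) (volume.restrict S) := fun S _ i =>
    (integrable_const _).indicator (cell_measurable i)
  have hival : ∀ (S : Set ℝ), ∀ (i : Fin (2^k)), 
      ∫ x in S, (cell (2^k) i).indicator (fun _ => (1:ℝ)) x = volume.real (S ∩ cell (2^k) i) := by
    intro S i
    rw [integral_indicator (cell_measurable i), Measure.restrict_restrict (cell_measurable i),
      Set.inter_comm]
    simp
  have hcongr : ∀ᵐ p ∂((volume.restrict S).prod (volume.restrict T)),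
      graphonOfGraph (hadG k) p.1 p.2 - 1/2 = ∑ i : Fin (2^k), ∑ j : Fin (2^k),
      (hadM (hadE k i) (hadE k j) / 2 - (if i = j then (hadM (hadE k i) (hadE k j) + 1) / 2 else 0))
        * ((cell (2^k) i).indicator (fun _ => (1:ℝ)) p.1
          * (cell (2^k) j).indicator (fun _ => (1:ℝ)) p.2) := by
    filter_upwards [Measure.quasiMeasurePreserving_fst.ae (hae S hS hS1),
      Measure.quasiMeasurePreserving_snd.ae (hae T hT hT1)] with p h1 h2
    exact had_pointwise k h1.1 h1.2 h2.1 h2.2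
  rw [integral_congr_ae hcongr, integral_finsetSum]
  · refine Finset.sum_congr rfl fun i _ => ?_
    rw [integral_finsetSum]
    · refine Finset.sum_congr rfl fun j _ => ?_
      rw [integral_const_mul, integral_prod_mul, hival, hival]
    · intro j _
      exact ((hi S i).mul_prod (hi T j)).const_mul _
  · intro i _
    refine integrable_finsetSum _ fun j _ => ?_
    exact ((hi S i).mul_prod (hi T j)).const_mul _

lemma had_cut (k : ℕ) {S T : Set ℝ} (hS : MeasurableSet S) (hT : MeasurableSet T)
    (hS1 : S ⊆ Set.Icc 0 1) (hT1 : T ⊆ Set.Icc 0 1) :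
    |∫ p in S ×ˢ T, (graphonOfGraph (hadG k) p.1 p.2 - 1/2)| ≤
      Real.sqrt ((1/2)^k) + (1/2)^k := by
  classical
  rw [had_integral k hS hT hS1 hT1]
  set s : Fin (2^k) → ℝ := fun i => volume.real (S ∩ cell (2^k) i) with hs
  set t : Fin (2^k) → ℝ := fun i => volume.real (T ∩ cell (2^k) i) with ht
  have hs1 : ∀ i, s i ≤ (1/2)^k := fun i => by
    have := cell_inter_le i S; push_cast at this; simpa using this
  have ht1 : ∀ i, t i ≤ (1/2)^k := fun i => by
    have := cell_inter_le i T; push_cast at this; simpa using this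
  have hs0 : ∀ i, 0 ≤ s i := fun i => measureReal_nonneg
  have ht0 : ∀ i, 0 ≤ t i := fun i => measureReal_nonneg
  have hpp : ((2:ℝ)^k) * (1/2)^k = 1 := by rw [← mul_pow]; norm_num
  have hp : (0:ℝ) < (1/2)^k := by positivity
  have sq_le : ∀ u v : Fin (2^k) → ℝ, (∀ i, u i ≤ (1/2)^k) → (∀ i, v i ≤ (1/2)^k) →
      (∀ i, 0 ≤ u i) → (∀ i, 0 ≤ v i) → ∑ i, u i * v i ≤ (1/2:ℝ)^k := by
    intro u v hu hv hu0 hv0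
    calc ∑ i, u i * v i ≤ ∑ i : Fin (2^k), ((1/2:ℝ)^k * (1/2)^k) :=
          Finset.sum_le_sum fun i _ => mul_le_mul (hu i) (hv i) (hv0 i) hp.le
      _ = (1/2)^k := by
        simp only [Finset.sum_const, Finset.card_univ, Fintype.card_fin, nsmul_eq_mul]
        push_cast
        rw [← mul_assoc, hpp, one_mul]
  have hsplit : ∑ i : Fin (2^k), ∑ j : Fin (2^k),
      (hadM (hadE k i) (hadE k j) / 2 - (if i = j then (hadM (hadE k i) (hadE k j) + 1) / 2 else 0))
        * (s i * t j) = (∑ i, ∑ j, hadM (hadE k i) (hadE k j) * s i * t j) / 2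
        - ∑ i, ((hadM (hadE k i) (hadE k i) + 1) / 2) * (s i * t i) := by
    rw [Finset.sum_div, ← Finset.sum_sub_distrib]
    refine Finset.sum_congr rfl fun i _ => ?_
    simp only [sub_mul, Finset.sum_sub_distrib, ite_mul, zero_mul, Finset.sum_ite_eq,
      Finset.mem_univ, if_true]
    rw [Finset.sum_div]
    congr 1
    refine Finset.sum_congr rfl fun j _ => ?_
    ring
  have hbil : |∑ i, ∑ j, hadM (hadE k i) (hadE k j) * s i * t j| ≤ Real.sqrt ((1/2)^k) := by
    apply Real.abs_le_sqrt
    have h := hadM_bilin (fun x => s ((hadE k).symm x)) (fun x => t ((hadE k).symm x))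
    have e1 : ∑ x, ∑ y, hadM x y * s ((hadE k).symm x) * t ((hadE k).symm y) =
        ∑ i, ∑ j, hadM (hadE k i) (hadE k j) * s i * t j := by
      rw [← (hadE k).sum_comp]
      refine Finset.sum_congr rfl fun i _ => ?_
      rw [← (hadE k).sum_comp]
      simp
    have e2 : ∑ x, s ((hadE k).symm x) ^ 2 = ∑ i, s i ^ 2 :=
      (hadE k).symm.sum_comp (fun i => s i ^ 2)
    have e3 : ∑ x, t ((hadE k).symm x) ^ 2 = ∑ i, t i ^ 2 :=
      (hadE k).symm.sum_comp (fun i => t i ^ 2)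
    rw [e1, e2, e3] at h
    refine h.trans ?_
    have f1 := sq_le s s hs1 hs1 hs0 hs0
    have f2 := sq_le t t ht1 ht1 ht0 ht0
    simp only [← sq] at f1 f2
    calc (∑ i, s i ^ 2) * (2^k * ∑ i, t i ^ 2) ≤ (1/2)^k * (2^k * (1/2)^k) := by
          apply mul_le_mul f1 _ (by positivity) hp.le
          exact mul_le_mul_of_nonneg_left f2 (by positivity)
      _ = (1/2)^k := by rw [hpp, mul_one]
  have hdiag : |∑ i, ((hadM (hadE k i) (hadE k i) + 1) / 2) * (s i * t i)| ≤ (1/2)^k := by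
    refine (Finset.abs_sum_le_sum_abs _ _).trans (le_trans ?_ (sq_le s t hs1 ht1 hs0 ht0))
    refine Finset.sum_le_sum fun i _ => ?_
    have hst := mul_nonneg (hs0 i) (ht0 i)
    rcases hadM_pm (hadE k i) (hadE k i) with h | h <;> rw [h]
    · rw [abs_of_nonneg (by linarith)]; linarith
    · norm_num; exact hst
  rw [hsplit]
  refine (abs_sub _ _).trans ?_
  rw [abs_div, abs_two]
  have := abs_nonneg (∑ i, ∑ j, hadM (hadE k i) (hadE k j) * s i * t j)
  linarith

lemma half_mem (Q : GraphClass)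
    (hall : ∀ n : ℕ, 1 ≤ n → Q n = (Set.univ : Set (SimpleGraph (Fin n)))) :
    (fun _ _ => (1/2:ℝ)) ∈ limitSet Q := by
  refine ⟨⟨fun _ _ => rfl, measurable_const, fun _ _ => by norm_num⟩,
    fun k => 2^k, hadG, fun k => ?_, ?_, ?_⟩
  · rw [hall _ Nat.one_le_two_pow]; trivial
  · exact tendsto_pow_atTop_atTop_of_one_lt (by norm_num)
  · have hlim : Tendsto (fun k : ℕ => Real.sqrt ((1/2)^k) + (1/2:ℝ)^k) atTop (nhds 0) := by
      have h1 : Tendsto (fun k : ℕ => (1/2:ℝ)^k) atTop (nhds 0) :=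
        tendsto_pow_atTop_nhds_zero_of_lt_one (by norm_num) (by norm_num)
      have h2 := (Real.continuous_sqrt.tendsto 0).comp h1
      simpa using h2.add h1
    refine tendsto_of_tendsto_of_tendsto_of_le_of_le tendsto_const_nhds hlim (fun k => ?_)
      (fun k => ?_)
    · apply Real.sInf_nonneg
      rintro r ⟨σ₁, σ₂, _, _, rfl⟩
      exact cutNorm_nonneg _
    · refine le_trans (csInf_le ⟨0, ?_⟩ ⟨id, id, isMPSelf_id, isMPSelf_id, rfl⟩) ?_
      · rintro r ⟨σ₁, σ₂, _, _, rfl⟩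
        exact cutNorm_nonneg _
      · apply Real.sSup_le
        · rintro r ⟨S, T, hS, hT, hS1, hT1, rfl⟩
          exact had_cut k hS hT hS1 hT1
        · positivity

/-- part of Theorem 1.6: for a hereditary class `Q`, the maximal
entropy over `Q̂` is `0` iff `Q` is random-free, and `1` iff `Q` is the class of all
graphs. -/
theorem stmt18 (Q : GraphClass) (hQ : IsHereditary Q) (hne : (limitSet Q).Nonempty) :
    (sSup (graphonEnt '' limitSet Q) = 0 ↔ ∀ W ∈ limitSet Q, IsRandomFree W) ∧
      (sSup (graphonEnt '' limitSet Q) = 1 ↔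
        ∀ n : ℕ, 1 ≤ n → Q n = (Set.univ : Set (SimpleGraph (Fin n)))) := by
  have hle : ∀ r ∈ graphonEnt '' limitSet Q, r ≤ 1 := by
    rintro _ ⟨W, hW, rfl⟩
    exact graphonEnt_le_one hW.1
  have hbdd : BddAbove (graphonEnt '' limitSet Q) := ⟨1, hle⟩
  refine ⟨⟨fun h W hW => ?_, fun h => ?_⟩, fun h n hn => forward_dir Q hQ hne h n hn, fun h => ?_⟩
  · have h1 : graphonEnt W ≤ 0 := h ▸ le_csSup hbdd ⟨W, hW, rfl⟩
    exact (graphonEnt_eq_zero_iff hW.1).1 (le_antisymm h1 (graphonEnt_nonneg hW.1))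
  · apply le_antisymm
    · apply csSup_le (hne.image _)
      rintro _ ⟨W, hW, rfl⟩
      exact ((graphonEnt_eq_zero_iff hW.1).2 (h W hW)).le
    · apply Real.sSup_nonneg
      rintro _ ⟨W, hW, rfl⟩
      exact graphonEnt_nonneg hW.1
  · apply le_antisymm (csSup_le (hne.image _) hle)
    have hm := half_mem Q h
    have he : graphonEnt (fun _ _ => (1/2:ℝ)) = 1 := by
      rw [graphonEnt_eq hm.1]
      simp only [binEnt_half]
      simp
    exact le_csSup hbdd ⟨_, hm, he⟩

end
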